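/- arXiv:1507.05214 — 2 statements merged into one kernel-verified Lean document; each statement's English description precedes it below -/
import Mathlib

section
/- There exists a unique row vector π ∈ ℝ^N with nonnegative entries summing to 1 such that πᵀP = πᵀ (a unique stationary probability distribution of the chain with transition matrix P); moreover, every entry of π is strictly positive. -/
open Matrix

/-- The random-walk transition matrix `H` of a bipartite graph with parts `U`, `V`
and edge relation `E`: `H i j = 1 / dᵢ` if `j` is adjacent to `i`, and `0` otherwise. -/
noncomputable def Hmat {U V : Type*} [Fintype U] [Fintype V]
    (E : U → V → Prop) [∀ u v, Decidable (E u v)] :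
    Matrix (U ⊕ V) (U ⊕ V) ℝ :=
  Matrix.of fun i j =>
    match i, j with
    | Sum.inl u, Sum.inr v =>
        if E u v then 1 / ((Finset.univ.filter fun v' => E u v').card : ℝ) else 0
    | Sum.inr v, Sum.inl u =>
        if E u v then 1 / ((Finset.univ.filter fun u' => E u' v).card : ℝ) else 0
    | _, _ => 0

/-- The block-wise teleportation matrix `M`: `M i j = 1 / xᵢ` if `j` lies in the same
part as `i` (where `xᵢ` is the size of the part containing `i`), and `0` otherwise. -/
noncomputable def Mmat (U V : Type*) [Fintype U] [Fintype V] :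
    Matrix (U ⊕ V) (U ⊕ V) ℝ :=
  Matrix.of fun i j =>
    match i, j with
    | Sum.inl _, Sum.inl _ => 1 / (Fintype.card U : ℝ)
    | Sum.inr _, Sum.inr _ => 1 / (Fintype.card V : ℝ)
    | _, _ => 0

/-- The BipartiteRank transition matrix `P = ε H + (1 - ε) M`. -/
noncomputable def Pmat {U V : Type*} [Fintype U] [Fintype V]
    (E : U → V → Prop) [∀ u v, Decidable (E u v)] (ε : ℝ) :
    Matrix (U ⊕ V) (U ⊕ V) ℝ :=
  ε • Hmat E + (1 - ε) • Mmat U V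

/-!
For a row-stochastic matrix `P`, left multiplication preserves the total mass, so `x ≤ x P` forces
`x P = x`; applied to `x⁺` this shows that positive parts of invariant row vectors are invariant.
If `P` is moreover irreducible, a nonzero nonnegative invariant vector is strictly positive, hence
every invariant vector has constant sign. Existence follows by normalizing a left eigenvector for
the eigenvalue `1`, and uniqueness because a vector of constant sign and zero total mass vanishes.

The matrix `ε H + (1 - ε) M` is irreducible because its square is entrywise positive: the
teleportation `M` reaches every vertex of the current part, in particular every neighbour of a
vertex of the other part, and `H` crosses over.
-/

section InvariantVectors

variable {ι R : Type*} [Fintype ι]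

lemma vecMul_pow_eq_self [Semiring R] [DecidableEq ι] {P : Matrix ι ι R} {x : ι → R}
    (hx : x ᵥ* P = x) (k : ℕ) : x ᵥ* P ^ k = x := by
  induction k with
  | zero => rw [pow_zero, vecMul_one]
  | succ k ih => rw [pow_succ, ← vecMul_vecMul, ih, hx]

lemma sum_vecMul_of_mulVec_one [Semiring R] {P : Matrix ι ι R} (hP : P *ᵥ 1 = 1) (x : ι → R) :
    ∑ j, (x ᵥ* P) j = ∑ i, x i := by
  rw [← dotProduct_one, ← dotProduct_mulVec, hP, dotProduct_one]

lemma vecMul_eq_self_of_le_vecMul [Ring R] [PartialOrder R] [IsOrderedRing R] {P : Matrix ι ι R}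
    {x : ι → R} (hP : P *ᵥ 1 = 1) (hx : x ≤ x ᵥ* P) : x ᵥ* P = x := by
  have hsum : ∑ j, x j = ∑ j, (x ᵥ* P) j := (sum_vecMul_of_mulVec_one hP x).symm
  have heq := (Finset.sum_eq_sum_iff_of_le fun j _ ↦ hx j).1 hsum
  exact funext fun j ↦ (heq j (Finset.mem_univ j)).symm

lemma exists_ne_zero_vecMul_eq_self [CommRing R] [IsDomain R] [Nonempty ι]
    {P : Matrix ι ι R} (hP : P *ᵥ 1 = 1) : ∃ x ≠ 0, x ᵥ* P = x := by
  classical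
  have hdet : (P - 1).det = 0 :=
    exists_mulVec_eq_zero_iff.1 ⟨1, one_ne_zero, by rw [sub_mulVec, hP, one_mulVec, sub_self]⟩
  obtain ⟨x, hx_ne, hx⟩ := exists_vecMul_eq_zero_iff.2 hdet
  exact ⟨x, hx_ne, by rwa [vecMul_sub, vecMul_one, sub_eq_zero] at hx⟩

section LinearOrderedRing

variable [Ring R] [LinearOrder R] [IsStrictOrderedRing R] {P : Matrix ι ι R} {x : ι → R}

lemma pos_of_vecMul_eq_self (hP : P.IsIrreducible) (hx_nonneg : 0 ≤ x) (hx_ne : x ≠ 0)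
    (hx : x ᵥ* P = x) (j : ι) : 0 < x j := by
  classical
  obtain ⟨i, hi⟩ := Function.ne_iff.1 hx_ne
  obtain ⟨k, -, hk⟩ := (isIrreducible_iff_exists_pow_pos hP.nonneg).1 hP i j
  have hterm_nonneg (l : ι) : 0 ≤ x l * (P ^ k) l j :=
    mul_nonneg (hx_nonneg l) (pow_apply_nonneg hP.nonneg k l j)
  calc
    0 < x i * (P ^ k) i j := mul_pos ((hx_nonneg i).lt_of_ne' hi) hk
    _ ≤ ∑ l, x l * (P ^ k) l j :=
      Finset.single_le_sum (fun l _ ↦ hterm_nonneg l) (Finset.mem_univ i)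
    _ = x j := congrFun (vecMul_pow_eq_self hx k) j

variable [DecidableEq ι]

lemma posPart_vecMul_eq_self (hP : P ∈ rowStochastic R ι) (hx : x ᵥ* P = x) :
    x⁺ ᵥ* P = x⁺ := by
  refine vecMul_eq_self_of_le_vecMul hP.2 (sup_le ?_ ?_)
  · calc
      x = x ᵥ* P := hx.symm
      _ ≤ x⁺ ᵥ* P := fun j ↦
        dotProduct_le_dotProduct_of_nonneg_right (le_posPart x) fun i ↦ hP.1 i j
  · exact nonneg_vecMul_of_mem_rowStochastic hP (posPart_nonneg x)

lemma nonneg_or_nonpos_of_vecMul_eq_self (hP : P ∈ rowStochastic R ι) (hirr : P.IsIrreducible)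
    (hx : x ᵥ* P = x) : 0 ≤ x ∨ x ≤ 0 := by
  by_cases hpos : x⁺ = 0
  · exact Or.inr (posPart_eq_zero.1 hpos)
  · refine Or.inl fun j ↦ le_of_lt (posPart_pos_iff.1 ?_)
    exact pos_of_vecMul_eq_self hirr (posPart_nonneg x) hpos (posPart_vecMul_eq_self hP hx) j

lemma eq_zero_of_vecMul_eq_self_of_sum_eq_zero (hP : P ∈ rowStochastic R ι)
    (hirr : P.IsIrreducible) (hx : x ᵥ* P = x) (hsum : ∑ i, x i = 0) : x = 0 := by
  rcases nonneg_or_nonpos_of_vecMul_eq_self hP hirr hx with hnonneg | hnonpos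
  · exact (Fintype.sum_eq_zero_iff_of_nonneg hnonneg).1 hsum
  · exact (Fintype.sum_eq_zero_iff_of_nonpos hnonpos).1 hsum

end LinearOrderedRing

lemma exists_nonneg_ne_zero_vecMul_eq_self [CommRing R] [LinearOrder R] [IsStrictOrderedRing R]
    [DecidableEq ι] [Nonempty ι] {P : Matrix ι ι R} (hP : P ∈ rowStochastic R ι)
    (hirr : P.IsIrreducible) : ∃ x, 0 ≤ x ∧ x ≠ 0 ∧ x ᵥ* P = x := by
  obtain ⟨x, hx_ne, hx⟩ := exists_ne_zero_vecMul_eq_self hP.2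
  rcases nonneg_or_nonpos_of_vecMul_eq_self hP hirr hx with hnonneg | hnonpos
  · exact ⟨x, hnonneg, hx_ne, hx⟩
  · exact ⟨-x, neg_nonneg.2 hnonpos, neg_ne_zero.2 hx_ne, by rw [neg_vecMul, hx]⟩

section LinearOrderedField

variable [Field R] [LinearOrder R] [IsStrictOrderedRing R]

lemma inv_sum_smul_mem_stdSimplex {x : ι → R} (hx_nonneg : 0 ≤ x) (hx_ne : x ≠ 0) :
    (∑ i, x i)⁻¹ • x ∈ stdSimplex R ι := by
  have hsum_nonneg : 0 ≤ ∑ i, x i := Finset.sum_nonneg fun i _ ↦ hx_nonneg i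
  have hsum_ne : ∑ i, x i ≠ 0 := fun h ↦ hx_ne ((Fintype.sum_eq_zero_iff_of_nonneg hx_nonneg).1 h)
  refine ⟨fun i ↦ mul_nonneg (inv_nonneg.2 hsum_nonneg) (hx_nonneg i), ?_⟩
  simp only [Pi.smul_apply, smul_eq_mul, ← Finset.mul_sum, inv_mul_cancel₀ hsum_ne]

theorem existsUnique_mem_stdSimplex_vecMul_eq_self [DecidableEq ι] [Nonempty ι]
    {P : Matrix ι ι R} (hP : P ∈ rowStochastic R ι) (hirr : P.IsIrreducible) :
    ∃! π, π ∈ stdSimplex R ι ∧ π ᵥ* P = π := by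
  obtain ⟨x, hx_nonneg, hx_ne, hx⟩ := exists_nonneg_ne_zero_vecMul_eq_self hP hirr
  refine existsUnique_of_exists_of_unique
    ⟨_, inv_sum_smul_mem_stdSimplex hx_nonneg hx_ne, by rw [smul_vecMul, hx]⟩ ?_
  rintro π π' ⟨⟨-, hsum⟩, hπ⟩ ⟨⟨-, hsum'⟩, hπ'⟩
  refine sub_eq_zero.1 (eq_zero_of_vecMul_eq_self_of_sum_eq_zero hP hirr ?_ ?_)
  · rw [sub_vecMul, hπ, hπ']
  · simp only [Pi.sub_apply, Finset.sum_sub_distrib, hsum, hsum', sub_self]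

end LinearOrderedField

end InvariantVectors

lemma isPrimitive_of_exists_pos_pos {ι R : Type*} [Fintype ι] [DecidableEq ι] [Ring R]
    [LinearOrder R] [IsStrictOrderedRing R] {P : Matrix ι ι R} (hP : ∀ i j, 0 ≤ P i j)
    (htwo : ∀ i j, ∃ k, 0 < P i k ∧ 0 < P k j) : P.IsPrimitive := by
  refine ⟨hP, 2, two_pos, fun i j ↦ ?_⟩
  obtain ⟨k, hik, hkj⟩ := htwo i j
  rw [sq, mul_apply]
  exact Finset.sum_pos' (fun l _ ↦ mul_nonneg (hP i l) (hP l j))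
    ⟨k, Finset.mem_univ k, mul_pos hik hkj⟩

lemma sum_ite_one_div_card_filter {α K : Type*} [Fintype α] [DivisionRing K] [CharZero K]
    (p : α → Prop) [DecidablePred p] (hp : ∃ a, p a) :
    ∑ a, (if p a then 1 / ((Finset.univ.filter p).card : K) else 0) = 1 := by
  obtain ⟨a, ha⟩ := hp
  have hcard : ((Finset.univ.filter p).card : K) ≠ 0 :=
    Nat.cast_ne_zero.2 (Finset.card_ne_zero_of_mem (Finset.mem_filter_univ a |>.2 ha))
  rw [← Finset.sum_filter, Finset.sum_const, nsmul_eq_mul, mul_one_div_cancel hcard]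

section BipartiteRank

variable {U V : Type*} [Fintype U] [Fintype V]

lemma Mmat_inl_inl_pos (u u' : U) : 0 < Mmat U V (.inl u) (.inl u') :=
  one_div_pos.2 (Nat.cast_pos.2 (Fintype.card_pos_iff.2 ⟨u⟩))

lemma Mmat_inr_inr_pos (v v' : V) : 0 < Mmat U V (.inr v) (.inr v') :=
  one_div_pos.2 (Nat.cast_pos.2 (Fintype.card_pos_iff.2 ⟨v⟩))

lemma Mmat_nonneg (i j : U ⊕ V) : 0 ≤ Mmat U V i j := by
  rcases i with u | v <;> rcases j with u' | v' <;> simp only [Mmat, of_apply] <;> positivity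

variable {E : U → V → Prop} {ε : ℝ} [∀ u v, Decidable (E u v)]

lemma Hmat_inl_inr_pos {u : U} {v : V} (huv : E u v) : 0 < Hmat E (.inl u) (.inr v) := by
  have hdeg : 0 < (Finset.univ.filter fun v' ↦ E u v').card :=
    Finset.card_pos.2 ⟨v, (Finset.mem_filter_univ v).2 huv⟩
  simpa [Hmat, huv] using hdeg

lemma Hmat_inr_inl_pos {u : U} {v : V} (huv : E u v) : 0 < Hmat E (.inr v) (.inl u) := by
  have hdeg : 0 < (Finset.univ.filter fun u' ↦ E u' v).card :=
    Finset.card_pos.2 ⟨u, (Finset.mem_filter_univ u).2 huv⟩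
  simpa [Hmat, huv] using hdeg

lemma Hmat_nonneg (i j : U ⊕ V) : 0 ≤ Hmat E i j := by
  rcases i with u | v <;> rcases j with u' | v' <;> simp only [Hmat, of_apply] <;> positivity

lemma Pmat_pos_of_Mmat_pos (hε0 : 0 ≤ ε) (hε1 : ε < 1) {i j : U ⊕ V} (hM : 0 < Mmat U V i j) :
    0 < Pmat E ε i j :=
  add_pos_of_nonneg_of_pos (mul_nonneg hε0 (Hmat_nonneg i j)) (mul_pos (sub_pos.2 hε1) hM)

lemma Pmat_pos_of_Hmat_pos (hε0 : 0 < ε) (hε1 : ε ≤ 1) {i j : U ⊕ V} (hH : 0 < Hmat E i j) :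
    0 < Pmat E ε i j :=
  add_pos_of_pos_of_nonneg (mul_pos hε0 hH)
    (mul_nonneg (sub_nonneg.2 hε1) (Mmat_nonneg i j))

variable [DecidableEq U] [DecidableEq V]

lemma Mmat_mem_rowStochastic : Mmat U V ∈ rowStochastic ℝ (U ⊕ V) := by
  refine mem_rowStochastic_iff_sum.2 ⟨Mmat_nonneg, ?_⟩
  rintro (u | v)
  · have : Nonempty U := ⟨u⟩
    simp [Mmat]
  · have : Nonempty V := ⟨v⟩
    simp [Mmat]

lemma Hmat_mem_rowStochastic (hU : ∀ u, ∃ v, E u v) (hV : ∀ v, ∃ u, E u v) :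
    Hmat E ∈ rowStochastic ℝ (U ⊕ V) := by
  refine mem_rowStochastic_iff_sum.2 ⟨Hmat_nonneg, ?_⟩
  rintro (u | v)
  · simpa [Hmat] using sum_ite_one_div_card_filter (K := ℝ) (fun v ↦ E u v) (hU u)
  · simpa [Hmat] using sum_ite_one_div_card_filter (K := ℝ) (fun u ↦ E u v) (hV v)

lemma Pmat_mem_rowStochastic (hU : ∀ u, ∃ v, E u v) (hV : ∀ v, ∃ u, E u v) (hε0 : 0 ≤ ε)
    (hε1 : ε ≤ 1) : Pmat E ε ∈ rowStochastic ℝ (U ⊕ V) :=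
  convex_rowStochastic (Hmat_mem_rowStochastic hU hV) Mmat_mem_rowStochastic hε0
    (sub_nonneg.2 hε1) (add_sub_cancel ε 1)

lemma Pmat_isPrimitive (hU : ∀ u, ∃ v, E u v) (hV : ∀ v, ∃ u, E u v) (hε0 : 0 < ε)
    (hε1 : ε < 1) : (Pmat E ε).IsPrimitive := by
  have hM {i j : U ⊕ V} : 0 < Mmat U V i j → 0 < Pmat E ε i j := Pmat_pos_of_Mmat_pos hε0.le hε1
  have hH {i j : U ⊕ V} : 0 < Hmat E i j → 0 < Pmat E ε i j := Pmat_pos_of_Hmat_pos hε0 hε1.le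
  refine isPrimitive_of_exists_pos_pos (Pmat_mem_rowStochastic hU hV hε0.le hε1.le).1 ?_
  rintro (u | v) (u' | v')
  · exact ⟨.inl u, hM (Mmat_inl_inl_pos u u), hM (Mmat_inl_inl_pos u u')⟩
  · obtain ⟨w, hw⟩ := hV v'
    exact ⟨.inl w, hM (Mmat_inl_inl_pos u w), hH (Hmat_inl_inr_pos hw)⟩
  · obtain ⟨w, hw⟩ := hU u'
    exact ⟨.inr w, hM (Mmat_inr_inr_pos v w), hH (Hmat_inr_inl_pos hw)⟩
  · exact ⟨.inr v, hM (Mmat_inr_inr_pos v v), hM (Mmat_inr_inr_pos v v')⟩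

end BipartiteRank

/-- There is a unique stationary probability distribution `π` (a nonnegative row vector
summing to `1` with `πᵀ P = πᵀ`), and all its entries are strictly positive. -/
theorem Pmat_stationary_exists_unique_pos {U V : Type*} [Fintype U] [Fintype V]
    [DecidableEq U] [DecidableEq V] [Nonempty U] [Nonempty V]
    (E : U → V → Prop) [∀ u v, Decidable (E u v)]
    (hedge : ∃ u v, E u v)
    (hnoIsolU : ∀ u : U, ∃ v : V, E u v) (hnoIsolV : ∀ v : V, ∃ u : U, E u v)
    (ε : ℝ) (hε0 : 0 < ε) (hε1 : ε < 1) :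
    ∃ π : (U ⊕ V) → ℝ,
      ((∀ i, 0 ≤ π i) ∧ ∑ i, π i = 1 ∧ π ᵥ* Pmat E ε = π) ∧
      (∀ π' : (U ⊕ V) → ℝ,
        ((∀ i, 0 ≤ π' i) ∧ ∑ i, π' i = 1 ∧ π' ᵥ* Pmat E ε = π') → π' = π) ∧
      (∀ i, 0 < π i) := by
  have hP := Pmat_mem_rowStochastic hnoIsolU hnoIsolV hε0.le hε1.le
  have hirr := (Pmat_isPrimitive hnoIsolU hnoIsolV hε0 hε1).isIrreducible
  obtain ⟨π, ⟨⟨hnonneg, hsum⟩, hπ⟩, huniq⟩ := existsUnique_mem_stdSimplex_vecMul_eq_self hP hirr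
  have hπ_ne : π ≠ 0 := by
    rintro rfl
    simp at hsum
  exact ⟨π, ⟨hnonneg, hsum, hπ⟩,
    fun π' ⟨hnonneg', hsum', hπ'⟩ ↦ huniq π' ⟨⟨hnonneg', hsum'⟩, hπ'⟩,
    pos_of_vecMul_eq_self hirr hnonneg hπ_ne hπ⟩
end

section
/- Let S be an n×n real row-stochastic matrix, let 0 ≤ ε < 1, and let G = εS + (1−ε)(1/n)·eeᵀ. If μ ∈ ℂ is an eigenvalue of S with μ ≠ 1, then εμ is an eigenvalue of G. (Consequently, if S has an eigenvalue of modulus 1 other than 1, then G has an eigenvalue of modulus exactly ε, so |λ₂(G)| = ε.) -/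
open Matrix

/-!
Left eigenvectors do not see the perturbation. If `v A = μ v` and `A u = r u` with `μ ≠ r`, then
evaluating `v A u` in both ways gives `v ⬝ u = 0`, so `v` annihilates every rank-one matrix `u wᵀ`
and remains a left eigenvector of `c A + u wᵀ`, now for `c μ`. A row-stochastic matrix fixes
`u = e`, and the teleportation term of the Google matrix has the form `e wᵀ`.
-/

section Map

variable {m n R K : Type*} [NonAssocSemiring R] [NonAssocSemiring K]

theorem map_mulVec_one_of_sum_row_eq_one [Fintype n] (f : R →+* K) {A : Matrix m n R}
    (hA : ∀ i, ∑ j, A i j = 1) : A.map f *ᵥ 1 = 1 := by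
  ext i
  simp only [mulVec, dotProduct_one, map_apply, ← map_sum, hA, map_one, Pi.one_apply]

theorem map_smul_add_smul_of_const (f : R →+* K) (A : Matrix m n R) (c d t : R) :
    (c • A + d • of fun _ _ => t).map f = f c • A.map f + vecMulVec 1 fun _ => f (d * t) := by
  ext i j
  simp

end Map

section Spectrum

variable {ι K : Type*} [Fintype ι]

theorem mem_spectrum_iff_exists_vecMul_eq_smul [DecidableEq ι] [Field K] {A : Matrix ι ι K}
    {μ : K} : μ ∈ spectrum K A ↔ ∃ v ≠ 0, v ᵥ* A = μ • v := by
  rw [spectrum.mem_iff, isUnit_iff_isUnit_det, isUnit_iff_ne_zero, not_not,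
    ← exists_vecMul_eq_zero_iff]
  simp only [vecMul_sub, Algebra.algebraMap_eq_smul_one, vecMul_smul, vecMul_one, sub_eq_zero,
    eq_comm]

theorem dotProduct_eq_zero_of_vecMul_eq_smul_of_mulVec_eq_smul [CommSemiring K] [IsDomain K]
    {A : Matrix ι ι K} {u v : ι → K} {μ r : K} (hv : v ᵥ* A = μ • v) (hu : A *ᵥ u = r • u)
    (hμr : μ ≠ r) : v ⬝ᵥ u = 0 := by
  have h : μ * (v ⬝ᵥ u) = r * (v ⬝ᵥ u) := calc
    μ * (v ⬝ᵥ u) = (v ᵥ* A) ⬝ᵥ u := by rw [hv, smul_dotProduct, smul_eq_mul]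
    _ = v ⬝ᵥ (A *ᵥ u) := (dotProduct_mulVec v A u).symm
    _ = r * (v ⬝ᵥ u) := by rw [hu, dotProduct_smul, smul_eq_mul]
  exact (mul_eq_mul_right_iff.mp h).resolve_left hμr

theorem google_eigenvalue_shift_general [DecidableEq ι] [Field K] {A : Matrix ι ι K}
    {u : ι → K} {r μ : K} (hu : A *ᵥ u = r • u) (hμ : μ ∈ spectrum K A) (hμr : μ ≠ r)
    (c : K) (w : ι → K) : c * μ ∈ spectrum K (c • A + vecMulVec u w) := by
  obtain ⟨v, hv0, hv⟩ := mem_spectrum_iff_exists_vecMul_eq_smul.mp hμ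
  have hvu : v ⬝ᵥ u = 0 := dotProduct_eq_zero_of_vecMul_eq_smul_of_mulVec_eq_smul hv hu hμr
  refine mem_spectrum_iff_exists_vecMul_eq_smul.mpr ⟨v, hv0, ?_⟩
  rw [vecMul_add, vecMul_smul, hv, vecMul_vecMulVec, hvu, zero_smul, add_zero, smul_smul]

end Spectrum

/-- If `μ ≠ 1` is an eigenvalue of a row-stochastic matrix `S`, then `ε μ` is an
eigenvalue of the Google matrix `G = ε S + (1-ε) (1/n) e eᵀ`. -/
theorem google_eigenvalue_shift (n : ℕ) (hn : 0 < n) (S : Matrix (Fin n) (Fin n) ℝ)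
    (hS0 : ∀ i j, 0 ≤ S i j) (hS1 : ∀ i, ∑ j, S i j = 1)
    (ε : ℝ) (hε0 : 0 ≤ ε) (hε1 : ε < 1) :
    ∀ μ : ℂ, μ ∈ spectrum ℂ (S.map Complex.ofReal) → μ ≠ 1 →
      (ε : ℂ) * μ ∈ spectrum ℂ
        ((ε • S + (1 - ε) • Matrix.of fun _ _ : Fin n => (1 : ℝ) / n).map
          Complex.ofReal) := by
  have hS : S.map Complex.ofReal *ᵥ 1 = (1 : ℂ) • 1 :=
    (map_mulVec_one_of_sum_row_eq_one Complex.ofRealHom hS1).trans (one_smul ℂ 1).symm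
  have hG := map_smul_add_smul_of_const Complex.ofRealHom S ε (1 - ε) (1 / n)
  exact fun μ hμ hμ1 => hG ▸ google_eigenvalue_shift_general hS hμ hμ1 ε _
end
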